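/- arXiv:1712.08407 — 2 statements merged into one kernel-verified Lean document; each statement's English description precedes it below -/
import Mathlib

section
/- The closed-loop system bipartite graph B has a perfect matching if and only if the bipartite graph G has a perfect matching. (Combination of Lemma 1 with the matching correspondence established in the proof of Theorem 1.) -/
namespace ResilientFeedback

/-- Vertices of the closed-loop system bipartite graph: `Sum.inl i` is `x_i`
(resp. `x'_i` on the left side), `Sum.inr (Sum.inl i)` is `u_i` (resp. `u'_i`),
and `Sum.inr (Sum.inr i)` is `y_i` (resp. `y'_i`).  Indices are 1-based. -/
abbrev V3 : Type := ℕ ⊕ ℕ ⊕ ℕ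

def xv (i : ℕ) : V3 := Sum.inl i
def uv (i : ℕ) : V3 := Sum.inr (Sum.inl i)
def yv (i : ℕ) : V3 := Sum.inr (Sum.inr i)

/-- `M` is a matching of the edge set `Ed`: a subset of `Ed` in which no two
distinct edges share an endpoint. -/
def IsMatching {α β : Type} (Ed M : Set (α × β)) : Prop :=
  M ⊆ Ed ∧ ∀ e ∈ M, ∀ f ∈ M, e ≠ f → e.1 ≠ f.1 ∧ e.2 ≠ f.2

/-- A perfect matching of a bipartite graph with left vertex set `L`:
a matching covering every vertex of `L`. -/
def IsPerfectMatchingLeft {α β : Type} (L : Set α) (Ed M : Set (α × β)) : Prop :=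
  IsMatching Ed M ∧ ∀ a ∈ L, ∃ b, (a, b) ∈ M

/-- A perfect matching of a bipartite graph with left vertex set `L` and right
vertex set `R` of equal size: a matching covering every vertex of `L` and of `R`. -/
def IsPerfectMatchingOn {α β : Type} (L : Set α) (R : Set β) (Ed M : Set (α × β)) : Prop :=
  IsMatching Ed M ∧ (∀ a ∈ L, ∃ b, (a, b) ∈ M) ∧ (∀ b ∈ R, ∃ a, (a, b) ∈ M)

/-- The (left, and identically the right) vertex set of the closed-loop system
bipartite graph `B`: `x'_1, …, x'_{s+2}` (resp. `x_1,…,x_{s+2}`), `u'_1,…,u'_s`, `y'_1,…,y'_r`. -/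
def vertsB (r s : ℕ) : Set V3 :=
  {v | (∃ i ∈ Set.Icc 1 (s + 2), v = xv i) ∨ (∃ i ∈ Set.Icc 1 s, v = uv i) ∨
       (∃ i ∈ Set.Icc 1 r, v = yv i)}

/-- The edges of the closed-loop system bipartite graph `B` built from the bipartite
graph `G = ({1,…,r}, {1,…,s}, E)`; a pair `(l, rgt)` is an edge from left vertex `l`
to right vertex `rgt`. -/
def edgesB (r s : ℕ) (E : Set (ℕ × ℕ)) : Set (V3 × V3) :=
  {e | (∃ j ∈ Set.Icc 1 (s + 2), e = (xv 2, xv j)) ∨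
       (∃ i ∈ Set.Icc 1 (s + 2), e = (xv i, xv 2)) ∨
       (∃ i ∈ Set.Icc 3 (s - r + 2), ∃ j ∈ Set.Icc 3 (s + 2), e = (xv i, xv j)) ∨
       (∃ i ∈ Set.Icc (s - r + 3) (s + 2), ∃ j ∈ Set.Icc 1 s, e = (xv i, uv j)) ∨
       (∃ i ∈ Set.Icc 1 r, ∃ j ∈ Set.Icc 3 (s + 2), e = (yv i, xv j)) ∨
       (∃ i j, (j, i) ∈ E ∧ e = (uv i, yv j)) ∨
       (∃ i ∈ Set.Icc 1 s, e = (uv i, uv i)) ∨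
       (∃ i ∈ Set.Icc 1 r, e = (yv i, yv i))}

/-- The feedback edges `E_K` of `B`: `u'_i — y_j` for exactly those pairs with
`(v_j, ṽ_i) ∈ E`. -/
def EKset (E : Set (ℕ × ℕ)) : Set (V3 × V3) :=
  {e | ∃ i j, (j, i) ∈ E ∧ e = (uv i, yv j)}

/-!
Identify each left vertex `v'` of `B` with the right vertex `v`, so that a perfect matching of `B`
is a permutation of its vertices along edges.

If `B` has a perfect matching, `x_1` forces the edge `x'_2 — x_1`, and then `x_3, …, x_{s+2}` can
only be matched with the `s` vertices `x'_3, …, x'_{s-r+2}, y'_1, …, y'_r`.  This uses up all of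
them, so no `y'_k — y_k` is in the matching and each `y_k` is matched through a feedback edge.
Conversely, every edge `v_k — ṽ_i` of a perfect matching of `G` gives the 3-cycle
`x_{s-r+2+k} → u_i → y_k → x_{s-r+2+k}`; together with the transposition of `x_1` and `x_2` and
fixed points elsewhere, these form a perfect matching of `B`.
-/

section Matchings

variable {α β : Type} {L : Set α} {R : Set β} {Ed M : Set (α × β)}

theorem IsMatching.snd_eq (hM : IsMatching Ed M) {a : α} {b c : β}
    (hb : (a, b) ∈ M) (hc : (a, c) ∈ M) : b = c := by
  by_contra hbc
  exact (hM.2 _ hb _ hc fun h => hbc (congrArg Prod.snd h)).1 rfl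

theorem IsMatching.fst_eq (hM : IsMatching Ed M) {a b : α} {c : β}
    (ha : (a, c) ∈ M) (hb : (b, c) ∈ M) : a = b := by
  by_contra hab
  exact (hM.2 _ ha _ hb fun h => hab (congrArg Prod.fst h)).2 rfl

theorem IsMatching.exists_mem_of_card_le (hM : IsMatching Ed M) {S : Finset α} {T : Finset β}
    (hT : ∀ b ∈ T, ∃ a ∈ S, (a, b) ∈ M) (hcard : S.card ≤ T.card) :
    ∀ a ∈ S, ∃ b ∈ T, (a, b) ∈ M := by
  intro a ha
  choose p hpS hpM using hT
  obtain ⟨b, hb, rfl⟩ := Finset.surj_on_of_inj_on_of_card_le p hpS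
    (fun b c hb hc h => hM.snd_eq (hpM b hb) (h ▸ hpM c hc)) hcard a ha
  exact ⟨b, hb, hpM b hb⟩

theorem isMatching_graphOn {f : α → β} (hf : Set.InjOn f L) (hEd : ∀ a ∈ L, (a, f a) ∈ Ed) :
    IsMatching Ed (L.graphOn f) := by
  constructor
  · rintro _ ⟨a, ha, rfl⟩
    exact hEd a ha
  · rintro _ ⟨a, ha, rfl⟩ _ ⟨b, hb, rfl⟩ hne
    have hab : a ≠ b := fun h => hne (by rw [h])
    exact ⟨hab, hf.ne ha hb hab⟩

theorem isPerfectMatchingLeft_graphOn {f : α → β} (hf : Set.InjOn f L)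
    (hEd : ∀ a ∈ L, (a, f a) ∈ Ed) : IsPerfectMatchingLeft L Ed (L.graphOn f) :=
  ⟨isMatching_graphOn hf hEd, fun a ha => ⟨f a, Set.mem_image_of_mem _ ha⟩⟩

theorem isPerfectMatchingOn_graphOn {f : α → β} (hf : Set.BijOn f L R)
    (hEd : ∀ a ∈ L, (a, f a) ∈ Ed) : IsPerfectMatchingOn L R Ed (L.graphOn f) := by
  refine ⟨isMatching_graphOn hf.injOn hEd, (isPerfectMatchingLeft_graphOn hf.injOn hEd).2, ?_⟩
  intro b hb
  obtain ⟨a, ha, rfl⟩ := hf.surjOn hb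
  exact ⟨a, Set.mem_image_of_mem _ ha⟩

theorem IsPerfectMatchingLeft.exists_injOn [Nonempty β] (hM : IsPerfectMatchingLeft L Ed M) :
    ∃ f : α → β, Set.InjOn f L ∧ ∀ a ∈ L, (a, f a) ∈ Ed := by
  obtain ⟨hM, hL⟩ := hM
  choose! f hf using hL
  exact ⟨f, fun a ha b hb h => hM.fst_eq (hf a ha) (h ▸ hf b hb), fun a ha => hM.1 (hf a ha)⟩

end Matchings

section ClosedLoopGraph

variable {r s : ℕ} {E : Set (ℕ × ℕ)} {i j : ℕ}

theorem xv_injective : Function.Injective xv := Sum.inl_injective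

theorem yv_injective : Function.Injective yv := Sum.inr_injective.comp Sum.inr_injective

theorem eq_xv_or_eq_uv_or_eq_yv (v : V3) :
    (∃ i, v = xv i) ∨ (∃ i, v = uv i) ∨ (∃ i, v = yv i) := by
  rcases v with i | i | i
  · exact .inl ⟨i, rfl⟩
  · exact .inr (.inl ⟨i, rfl⟩)
  · exact .inr (.inr ⟨i, rfl⟩)

@[simp]
theorem xv_mem_vertsB : xv i ∈ vertsB r s ↔ i ∈ Set.Icc 1 (s + 2) := by
  simp [vertsB, xv, uv, yv]

@[simp]
theorem uv_mem_vertsB : uv i ∈ vertsB r s ↔ i ∈ Set.Icc 1 s := by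
  simp [vertsB, xv, uv, yv]

@[simp]
theorem yv_mem_vertsB : yv i ∈ vertsB r s ↔ i ∈ Set.Icc 1 r := by
  simp [vertsB, xv, uv, yv]

theorem vertsB_finite (r s : ℕ) : (vertsB r s).Finite := by
  have hunion : vertsB r s =
      xv '' Set.Icc 1 (s + 2) ∪ (uv '' Set.Icc 1 s ∪ yv '' Set.Icc 1 r) := by
    ext v
    simp only [vertsB, Set.mem_ofPred_eq, Set.mem_union, Set.mem_image, eq_comm]
  rw [hunion]
  exact ((Set.finite_Icc _ _).image _).union
    (((Set.finite_Icc _ _).image _).union ((Set.finite_Icc _ _).image _))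

@[simp]
theorem xv_xv_mem_edgesB : (xv i, xv j) ∈ edgesB r s E ↔
    (i = 2 ∧ j ∈ Set.Icc 1 (s + 2)) ∨ (i ∈ Set.Icc 1 (s + 2) ∧ j = 2) ∨
      (i ∈ Set.Icc 3 (s - r + 2) ∧ j ∈ Set.Icc 3 (s + 2)) := by
  simp only [edgesB, xv, uv, yv, Set.mem_ofPred_eq, Prod.mk.injEq, Sum.inl.injEq, reduceCtorEq]
  grind

@[simp]
theorem xv_uv_mem_edgesB : (xv i, uv j) ∈ edgesB r s E ↔
    i ∈ Set.Icc (s - r + 3) (s + 2) ∧ j ∈ Set.Icc 1 s := by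
  simp [edgesB, xv, uv, yv]

@[simp]
theorem xv_yv_notMem_edgesB : (xv i, yv j) ∉ edgesB r s E := by
  simp [edgesB, xv, uv, yv]

@[simp]
theorem uv_xv_notMem_edgesB : (uv i, xv j) ∉ edgesB r s E := by
  simp [edgesB, xv, uv, yv]

@[simp]
theorem uv_uv_mem_edgesB : (uv i, uv j) ∈ edgesB r s E ↔ i ∈ Set.Icc 1 s ∧ i = j := by
  simp only [edgesB, xv, uv, yv, Set.mem_ofPred_eq, Prod.mk.injEq, Sum.inl.injEq, Sum.inr.injEq,
    reduceCtorEq]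
  grind

@[simp]
theorem uv_yv_mem_edgesB : (uv i, yv j) ∈ edgesB r s E ↔ (j, i) ∈ E := by
  simp [edgesB, xv, uv, yv]

@[simp]
theorem yv_xv_mem_edgesB : (yv i, xv j) ∈ edgesB r s E ↔
    i ∈ Set.Icc 1 r ∧ j ∈ Set.Icc 3 (s + 2) := by
  simp [edgesB, xv, uv, yv]

@[simp]
theorem yv_yv_mem_edgesB : (yv i, yv j) ∈ edgesB r s E ↔ i ∈ Set.Icc 1 r ∧ i = j := by
  simp only [edgesB, xv, uv, yv, Set.mem_ofPred_eq, Prod.mk.injEq, Sum.inr.injEq, reduceCtorEq]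
  grind

theorem edgesB_subset_vertsB_prod (hE : E ⊆ Set.Icc 1 r ×ˢ Set.Icc 1 s) :
    edgesB r s E ⊆ vertsB r s ×ˢ vertsB r s := by
  have htwo : xv 2 ∈ vertsB r s := by simp
  rintro _ (⟨j, hj, rfl⟩ | ⟨i, hi, rfl⟩ | ⟨i, hi, j, hj, rfl⟩ | ⟨i, hi, j, hj, rfl⟩ |
    ⟨i, hi, j, hj, rfl⟩ | ⟨i, j, hij, rfl⟩ | ⟨i, hi, rfl⟩ | ⟨i, hi, rfl⟩)
  · exact ⟨htwo, xv_mem_vertsB.2 hj⟩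
  · exact ⟨xv_mem_vertsB.2 hi, htwo⟩
  · exact ⟨xv_mem_vertsB.2 (by grind), xv_mem_vertsB.2 (by grind)⟩
  · exact ⟨xv_mem_vertsB.2 (by grind), uv_mem_vertsB.2 hj⟩
  · exact ⟨yv_mem_vertsB.2 hi, xv_mem_vertsB.2 (by grind)⟩
  · exact ⟨uv_mem_vertsB.2 (hE hij).2, yv_mem_vertsB.2 (hE hij).1⟩
  · exact ⟨uv_mem_vertsB.2 hi, uv_mem_vertsB.2 hi⟩
  · exact ⟨yv_mem_vertsB.2 hi, yv_mem_vertsB.2 hi⟩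

end ClosedLoopGraph

section FeedbackEdges

variable {r s : ℕ} {E : Set (ℕ × ℕ)} {M : Set (V3 × V3)}

/-- The left vertices `x'_3, …, x'_{s-r+2}, y'_1, …, y'_r`: the neighbours other than `x'_2` of
each of the right vertices `x_3, …, x_{s+2}`. -/
def tailNeighbors (r s : ℕ) : Finset V3 :=
  (Finset.Icc 3 (s - r + 2)).image xv ∪ (Finset.Icc 1 r).image yv

theorem card_tailNeighbors_le (hrs : r ≤ s) : (tailNeighbors r s).card ≤ s :=
  calc (tailNeighbors r s).card
      ≤ ((Finset.Icc 3 (s - r + 2)).image xv).card + ((Finset.Icc 1 r).image yv).card :=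
        Finset.card_union_le _ _
    _ ≤ (Finset.Icc 3 (s - r + 2)).card + (Finset.Icc 1 r).card :=
        add_le_add Finset.card_image_le Finset.card_image_le
    _ = s := by
        simp only [Nat.card_Icc]
        omega

theorem eq_xv_two_of_mem_edgesB_xv_one {a : V3} (ha : (a, xv 1) ∈ edgesB r s E) : a = xv 2 := by
  rcases eq_xv_or_eq_uv_or_eq_yv a with ⟨i, rfl⟩ | ⟨i, rfl⟩ | ⟨i, rfl⟩ <;> simp_all

theorem mem_tailNeighbors_of_mem_edgesB {a : V3} {j : ℕ} (ha : (a, xv j) ∈ edgesB r s E)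
    (hj : 3 ≤ j) (ha₂ : a ≠ xv 2) : a ∈ tailNeighbors r s := by
  rcases eq_xv_or_eq_uv_or_eq_yv a with ⟨i, rfl⟩ | ⟨i, rfl⟩ | ⟨i, rfl⟩
  · have hi : 3 ≤ i ∧ i ≤ s - r + 2 := by
      have hi₂ : i ≠ 2 := fun h => ha₂ (congrArg xv h)
      simp only [xv_xv_mem_edgesB, Set.mem_Icc] at ha
      omega
    exact Finset.mem_union_left _ (Finset.mem_image_of_mem _ (Finset.mem_Icc.2 hi))
  · exact absurd ha uv_xv_notMem_edgesB
  · exact Finset.mem_union_right _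
      (Finset.mem_image_of_mem _ (Finset.mem_Icc.2 (yv_xv_mem_edgesB.1 ha).1))

theorem exists_yv_xv_mem_of_isPerfectMatchingOn (hrs : r ≤ s)
    (hM : IsPerfectMatchingOn (vertsB r s) (vertsB r s) (edgesB r s E) M)
    {k : ℕ} (hk : k ∈ Set.Icc 1 r) : ∃ j, (yv k, xv j) ∈ M := by
  obtain ⟨hM, -, hR⟩ := hM
  have hx₁ : (xv 2, xv 1) ∈ M := by
    obtain ⟨a, ha⟩ := hR (xv 1) (by simp)
    rwa [eq_xv_two_of_mem_edgesB_xv_one (hM.1 ha)] at ha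
  have htail : ∀ b ∈ (Finset.Icc 3 (s + 2)).image xv, ∃ a ∈ tailNeighbors r s, (a, b) ∈ M := by
    intro b hb
    obtain ⟨j, hj, rfl⟩ := Finset.mem_image.1 hb
    rw [Finset.mem_Icc] at hj
    obtain ⟨a, ha⟩ := hR (xv j) (xv_mem_vertsB.2 ⟨by omega, hj.2⟩)
    refine ⟨a, mem_tailNeighbors_of_mem_edgesB (hM.1 ha) hj.1 ?_, ha⟩
    rintro rfl
    have : j = 1 := xv_injective (hM.snd_eq ha hx₁)
    omega
  have hcard : (tailNeighbors r s).card ≤ ((Finset.Icc 3 (s + 2)).image xv).card := by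
    simpa [Finset.card_image_of_injective _ xv_injective] using card_tailNeighbors_le hrs
  obtain ⟨b, hb, hkb⟩ := hM.exists_mem_of_card_le htail hcard (yv k)
    (Finset.mem_union_right _ (Finset.mem_image_of_mem _ (Finset.mem_Icc.2 hk)))
  obtain ⟨j, -, rfl⟩ := Finset.mem_image.1 hb
  exact ⟨j, hkb⟩

theorem exists_uv_yv_mem_of_isPerfectMatchingOn (hrs : r ≤ s)
    (hM : IsPerfectMatchingOn (vertsB r s) (vertsB r s) (edgesB r s E) M)
    {k : ℕ} (hk : k ∈ Set.Icc 1 r) : ∃ i, (uv i, yv k) ∈ M := by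
  obtain ⟨j, hj⟩ := exists_yv_xv_mem_of_isPerfectMatchingOn hrs hM hk
  obtain ⟨hM, -, hR⟩ := hM
  obtain ⟨a, ha⟩ := hR (yv k) (yv_mem_vertsB.2 hk)
  rcases eq_xv_or_eq_uv_or_eq_yv a with ⟨i, rfl⟩ | ⟨i, rfl⟩ | ⟨i, rfl⟩
  · exact absurd (hM.1 ha) xv_yv_notMem_edgesB
  · exact ⟨i, ha⟩
  · obtain rfl : i = k := (yv_yv_mem_edgesB.1 (hM.1 ha)).2
    exact absurd (hM.snd_eq ha hj) (by simp [xv, yv])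

theorem exists_injOn_of_isPerfectMatchingOn (hrs : r ≤ s)
    (hM : IsPerfectMatchingOn (vertsB r s) (vertsB r s) (edgesB r s E) M) :
    ∃ f : ℕ → ℕ, Set.InjOn f (Set.Icc 1 r) ∧ ∀ k ∈ Set.Icc 1 r, (k, f k) ∈ E := by
  have hfeedback : ∀ k ∈ Set.Icc 1 r, ∃ i, (uv i, yv k) ∈ M :=
    fun k hk => exists_uv_yv_mem_of_isPerfectMatchingOn hrs hM hk
  choose! f hf using hfeedback
  refine ⟨f, fun k hk l hl h => ?_, fun k hk => uv_yv_mem_edgesB.1 (hM.1.1 (hf k hk))⟩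
  exact yv_injective (hM.1.snd_eq (hf k hk) (h ▸ hf l hl))

end FeedbackEdges

section ClosedLoopMate

variable {r s : ℕ} {E : Set (ℕ × ℕ)} {f : ℕ → ℕ}

open Classical in
/-- The map sending each left vertex of `B` to its partner in the perfect matching of `B` built
from the perfect matching `{v_k — ṽ_{f k}}` of `G`.  It sends `x_{s-r+2+k}` to `u_{f k}`,
`u_{f k}` to `y_k` and `y_k` to `x_{s-r+2+k}`, swaps `x_1` with `x_2`, and fixes every other
vertex of `B`. -/
noncomputable def closedLoopMate (r s : ℕ) (f : ℕ → ℕ) : V3 → V3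
  | .inl i => if i ≤ s - r + 2 then xv (Equiv.swap 1 2 i) else uv (f (i - (s - r + 2)))
  | .inr (.inl i) =>
    if i ∈ f '' Set.Icc 1 r then yv (Function.invFunOn f (Set.Icc 1 r) i) else uv i
  | .inr (.inr k) => xv (s - r + 2 + k)

theorem closedLoopMate_xv_of_le {i : ℕ} (hi : i ≤ s - r + 2) :
    closedLoopMate r s f (xv i) = xv (Equiv.swap 1 2 i) :=
  if_pos hi

theorem closedLoopMate_xv_add {k : ℕ} (hk : 1 ≤ k) :
    closedLoopMate r s f (xv (s - r + 2 + k)) = uv (f k) := by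
  have hlt : ¬ s - r + 2 + k ≤ s - r + 2 := by omega
  simp only [closedLoopMate, xv, if_neg hlt, Nat.add_sub_cancel_left]

theorem closedLoopMate_uv_apply (hf : Set.InjOn f (Set.Icc 1 r)) {k : ℕ}
    (hk : k ∈ Set.Icc 1 r) : closedLoopMate r s f (uv (f k)) = yv k := by
  have hinv : Function.invFunOn f (Set.Icc 1 r) (f k) = k := hf.leftInvOn_invFunOn hk
  simp only [closedLoopMate, uv, if_pos (Set.mem_image_of_mem f hk), hinv]

theorem closedLoopMate_uv_of_notMem {i : ℕ} (hi : i ∉ f '' Set.Icc 1 r) :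
    closedLoopMate r s f (uv i) = uv i :=
  if_neg hi

theorem closedLoopMate_yv (k : ℕ) : closedLoopMate r s f (yv k) = xv (s - r + 2 + k) :=
  rfl

theorem eq_one_or_eq_two_or_mem_Icc_or_eq_add (hrs : r ≤ s) {i : ℕ}
    (hi : i ∈ Set.Icc 1 (s + 2)) :
    i = 1 ∨ i = 2 ∨ i ∈ Set.Icc 3 (s - r + 2) ∨ ∃ k ∈ Set.Icc 1 r, i = s - r + 2 + k := by
  simp only [Set.mem_Icc] at hi ⊢
  by_cases hle : i ≤ s - r + 2
  · omega
  · exact .inr (.inr (.inr ⟨i - (s - r + 2), by omega, by omega⟩))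

theorem swap_one_two_of_three_le {i : ℕ} (hi : 3 ≤ i) : Equiv.swap 1 2 i = i :=
  Equiv.swap_apply_of_ne_of_ne (by omega) (by omega)

theorem mk_closedLoopMate_mem_edgesB (hrs : r ≤ s) (hE : E ⊆ Set.Icc 1 r ×ˢ Set.Icc 1 s)
    (hf : Set.InjOn f (Set.Icc 1 r)) (hfE : ∀ k ∈ Set.Icc 1 r, (k, f k) ∈ E) :
    ∀ v ∈ vertsB r s, (v, closedLoopMate r s f v) ∈ edgesB r s E := by
  rintro v (⟨i, hi, rfl⟩ | ⟨i, hi, rfl⟩ | ⟨k, hk, rfl⟩)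
  · obtain rfl | rfl | hi | ⟨k, hk, rfl⟩ := eq_one_or_eq_two_or_mem_Icc_or_eq_add hrs hi
    · rw [closedLoopMate_xv_of_le (by omega)]
      simp
    · rw [closedLoopMate_xv_of_le (by omega)]
      simp
    · rw [closedLoopMate_xv_of_le hi.2, swap_one_two_of_three_le hi.1, xv_xv_mem_edgesB]
      exact .inr (.inr ⟨hi, hi.1, hi.2.trans (by omega)⟩)
    · rw [closedLoopMate_xv_add hk.1, xv_uv_mem_edgesB]
      exact ⟨⟨by grind, hi.2⟩, (hE (hfE k hk)).2⟩
  · by_cases himg : i ∈ f '' Set.Icc 1 r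
    · obtain ⟨k, hk, rfl⟩ := himg
      rw [closedLoopMate_uv_apply hf hk, uv_yv_mem_edgesB]
      exact hfE k hk
    · rw [closedLoopMate_uv_of_notMem himg, uv_uv_mem_edgesB]
      exact ⟨hi, rfl⟩
  · rw [closedLoopMate_yv, yv_xv_mem_edgesB]
    exact ⟨hk, by grind⟩

theorem surjOn_closedLoopMate (hrs : r ≤ s) (hf : Set.InjOn f (Set.Icc 1 r))
    (hfs : Set.MapsTo f (Set.Icc 1 r) (Set.Icc 1 s)) :
    Set.SurjOn (closedLoopMate r s f) (vertsB r s) (vertsB r s) := by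
  rintro v (⟨i, hi, rfl⟩ | ⟨i, hi, rfl⟩ | ⟨k, hk, rfl⟩)
  · obtain rfl | rfl | hi' | ⟨k, hk, rfl⟩ := eq_one_or_eq_two_or_mem_Icc_or_eq_add hrs hi
    · exact ⟨xv 2, by simp, by rw [closedLoopMate_xv_of_le (by omega), Equiv.swap_apply_right]⟩
    · exact ⟨xv 1, by simp, by rw [closedLoopMate_xv_of_le (by omega), Equiv.swap_apply_left]⟩
    · exact ⟨xv i, xv_mem_vertsB.2 hi,
        by rw [closedLoopMate_xv_of_le hi'.2, swap_one_two_of_three_le hi'.1]⟩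
    · exact ⟨yv k, yv_mem_vertsB.2 hk, closedLoopMate_yv k⟩
  · by_cases himg : i ∈ f '' Set.Icc 1 r
    · obtain ⟨k, hk, rfl⟩ := himg
      exact ⟨xv (s - r + 2 + k), xv_mem_vertsB.2 (by grind), closedLoopMate_xv_add hk.1⟩
    · exact ⟨uv i, uv_mem_vertsB.2 hi, closedLoopMate_uv_of_notMem himg⟩
  · exact ⟨uv (f k), uv_mem_vertsB.2 (hfs hk), closedLoopMate_uv_apply hf hk⟩

theorem bijOn_closedLoopMate (hrs : r ≤ s) (hE : E ⊆ Set.Icc 1 r ×ˢ Set.Icc 1 s)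
    (hf : Set.InjOn f (Set.Icc 1 r)) (hfE : ∀ k ∈ Set.Icc 1 r, (k, f k) ∈ E) :
    Set.BijOn (closedLoopMate r s f) (vertsB r s) (vertsB r s) := by
  have hmaps : Set.MapsTo (closedLoopMate r s f) (vertsB r s) (vertsB r s) := fun v hv =>
    (edgesB_subset_vertsB_prod hE (mk_closedLoopMate_mem_edgesB hrs hE hf hfE v hv)).2
  have hsurj : Set.SurjOn (closedLoopMate r s f) (vertsB r s) (vertsB r s) :=
    surjOn_closedLoopMate hrs hf fun k hk => (hE (hfE k hk)).2
  exact ((vertsB_finite r s).surjOn_iff_bijOn_of_mapsTo hmaps).1 hsurj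

end ClosedLoopMate

/-- combination of Lemma 1 with the matching correspondence in
Theorem 1.  The closed-loop system bipartite graph `B` has a perfect matching iff
the bipartite graph `G` has a perfect matching. -/
theorem B_pm_iff_G_pm (r s : ℕ) (hr : 0 < r) (hrs : r ≤ s)
    (E : Set (ℕ × ℕ)) (hE : E ⊆ Set.Icc 1 r ×ˢ Set.Icc 1 s) :
    (∃ M, IsPerfectMatchingOn (vertsB r s) (vertsB r s) (edgesB r s E) M) ↔
    (∃ M, IsPerfectMatchingLeft (Set.Icc 1 r) E M) := by
  constructor
  · rintro ⟨M, hM⟩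
    obtain ⟨f, hf, hfE⟩ := exists_injOn_of_isPerfectMatchingOn hrs hM
    exact ⟨_, isPerfectMatchingLeft_graphOn hf hfE⟩
  · rintro ⟨M, hM⟩
    obtain ⟨f, hf, hfE⟩ := hM.exists_injOn
    exact ⟨_, isPerfectMatchingOn_graphOn (bijOn_closedLoopMate hrs hE hf hfE)
      (mk_closedLoopMate_mem_edgesB hrs hE hf hfE)⟩

end ResilientFeedback
end

section
/- Let ε ≥ 1 be a real number and let T* be a γ-resilient subset of {1,…,r} of minimum cardinality. If T' ⊆ {1,…,r} is γ-resilient and |T'| ≤ ε·|T*|, then T' is a multi-cover of U with demand γ+1 and |T'| ≤ ε·c, where c is the minimum cardinality of a multi-cover of U with demand γ+1. (Paper's Theorem 3(i).) -/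
namespace ResilientFeedback

/-- Two vertices lie in the same strongly connected component: each is reachable
from the other by a directed path. -/
def SameSCC {V : Type} (adj : V → V → Prop) (a b : V) : Prop :=
  Relation.ReflTransGen adj a b ∧ Relation.ReflTransGen adj b a

/-- Edge relation of the closed-loop digraph `D_T` of the reduction: a self-loop
`x_j → x_j` for every `j ∈ {1,…,N}`; `u_1 → x_j` for every `j ∈ {1,…,N}`;
`x_j → y_i` whenever `i ∈ {1,…,r}` and `j ∈ S i`; and the feedback edges
`y_i → u_1` for every `i ∈ T`. -/
def adjD (N r : ℕ) (S : ℕ → Set ℕ) (T : Set ℕ) : V3 → V3 → Prop := fun a b =>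
  (∃ j ∈ Set.Icc 1 N, a = xv j ∧ b = xv j) ∨
  (∃ j ∈ Set.Icc 1 N, a = uv 1 ∧ b = xv j) ∨
  (∃ i ∈ Set.Icc 1 r, ∃ j ∈ S i, a = xv j ∧ b = yv i) ∨
  (∃ i ∈ T, a = yv i ∧ b = uv 1)

/-- `T` is `γ`-resilient: for every `I ⊆ T` with `|I| ≤ γ`, every state vertex
`x_j` lies in the same SCC of `D_{T∖I}` as both endpoints of some feedback edge
`y_i → u_1` with `i ∈ T∖I`. -/
def Resilient (N r : ℕ) (S : ℕ → Set ℕ) (γ : ℕ) (T : Set ℕ) : Prop :=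
  ∀ I ⊆ T, I.ncard ≤ γ → ∀ j ∈ Set.Icc 1 N,
    ∃ i ∈ T \ I, SameSCC (adjD N r S (T \ I)) (xv j) (yv i) ∧
                 SameSCC (adjD N r S (T \ I)) (xv j) (uv 1)

/-- `T` is a multi-cover of the universe `{1,…,N}` with demand `α`: every element
`e ∈ {1,…,N}` satisfies `|{i ∈ T : e ∈ S_i}| ≥ α`. -/
def MultiCover (N : ℕ) (S : ℕ → Set ℕ) (α : ℕ) (T : Set ℕ) : Prop :=
  ∀ e ∈ Set.Icc 1 N, α ≤ {i ∈ T | e ∈ S i}.ncard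

/-!
From a state vertex `x_j` the only way on is to an output `y_i` with `j ∈ S_i`, and from `y_i` only
to `u_1`, by the feedback link `i`; since `u_1 → x_j`, the state `x_j` shares its component with a
feedback edge exactly when some link in use covers `j`. Hence `T` tolerates the loss of any `γ`
links if and only if it covers every element at least `γ + 1` times. The two minimisation problems
have the same feasible sets and the same cost, so approximation guarantees carry over.
-/

section Digraph

variable {N r : ℕ} {S : ℕ → Set ℕ} {T : Set ℕ} {i j : ℕ}

theorem adjD_xv_iff {b : V3} : adjD N r S T (xv j) b ↔
    (j ∈ Set.Icc 1 N ∧ b = xv j) ∨ ∃ i ∈ Set.Icc 1 r, j ∈ S i ∧ b = yv i := by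
  simp [adjD, xv, uv, yv]

theorem adjD_yv_iff {b : V3} : adjD N r S T (yv i) b ↔ i ∈ T ∧ b = uv 1 := by
  simp [adjD, xv, uv, yv]

theorem adjD_uv_one_iff {b : V3} :
    adjD N r S T (uv 1) b ↔ ∃ j ∈ Set.Icc 1 N, b = xv j := by
  simp [adjD, xv, uv, yv]

theorem mem_of_reflTransGen_yv_uv
    (h : Relation.ReflTransGen (adjD N r S T) (yv i) (uv 1)) : i ∈ T := by
  rcases h.cases_head with heq | ⟨b, hadj, -⟩
  · simp [yv, uv] at heq
  · exact (adjD_yv_iff.mp hadj).1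

theorem exists_mem_of_reflTransGen_xv_uv
    (h : Relation.ReflTransGen (adjD N r S T) (xv j) (uv 1)) : ∃ i ∈ T, j ∈ S i := by
  generalize ha : xv j = a at h
  induction h using Relation.ReflTransGen.head_induction_on with
  | refl => simp [xv, uv] at ha
  | head hadj hpath ih =>
    subst ha
    rcases adjD_xv_iff.mp hadj with ⟨-, rfl⟩ | ⟨i, -, hji, rfl⟩
    · exact ih rfl
    · exact ⟨i, mem_of_reflTransGen_yv_uv hpath, hji⟩

theorem sameSCC_of_triangle {V : Type} {adj : V → V → Prop} {a b c : V}
    (hab : adj a b) (hbc : adj b c) (hca : adj c a) : SameSCC adj a b ∧ SameSCC adj a c :=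
  ⟨⟨.single hab, .tail (.single hbc) hca⟩, ⟨.tail (.single hab) hbc, .single hca⟩⟩

theorem exists_feedback_sameSCC_iff (hT : T ⊆ Set.Icc 1 r) (hj : j ∈ Set.Icc 1 N) :
    (∃ i ∈ T, SameSCC (adjD N r S T) (xv j) (yv i) ∧ SameSCC (adjD N r S T) (xv j) (uv 1)) ↔
      ∃ i ∈ T, j ∈ S i := by
  constructor
  · rintro ⟨-, -, -, hreach, -⟩
    exact exists_mem_of_reflTransGen_xv_uv hreach
  · rintro ⟨i, hi, hji⟩
    exact ⟨i, hi, sameSCC_of_triangle (adjD_xv_iff.mpr (.inr ⟨i, hT hi, hji, rfl⟩))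
      (adjD_yv_iff.mpr ⟨hi, rfl⟩) (adjD_uv_one_iff.mpr ⟨j, hj, rfl⟩)⟩

end Digraph

section MultiCover

theorem lt_ncard_iff_forall_sdiff_nonempty {α : Type*} {A T : Set α} {k : ℕ} (hT : T.Finite)
    (hAT : A ⊆ T) : k < A.ncard ↔ ∀ I ⊆ T, I.ncard ≤ k → (A \ I).Nonempty := by
  constructor
  · intro hk I hI hIk
    exact Set.sdiff_nonempty_of_ncard_lt_ncard (hIk.trans_lt hk) (hT.subset hI)
  · intro h
    by_contra! hk
    simpa using h A hAT hk

variable {N r γ : ℕ} {S : ℕ → Set ℕ} {T : Set ℕ}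

theorem resilient_iff_forall_sdiff_covers (hT : T ⊆ Set.Icc 1 r) :
    Resilient N r S γ T ↔
      ∀ I ⊆ T, I.ncard ≤ γ → ∀ j ∈ Set.Icc 1 N, ∃ i ∈ T \ I, j ∈ S i :=
  forall₂_congr fun _ _ => forall₃_congr fun _ _ hj =>
    exists_feedback_sameSCC_iff (Set.sdiff_subset.trans hT) hj

theorem multiCover_succ_iff_forall_sdiff_covers (hT : T.Finite) :
    MultiCover N S (γ + 1) T ↔
      ∀ I ⊆ T, I.ncard ≤ γ → ∀ j ∈ Set.Icc 1 N, ∃ i ∈ T \ I, j ∈ S i := by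
  have covers_iff (j : ℕ) : γ + 1 ≤ {i ∈ T | j ∈ S i}.ncard ↔
      ∀ I ⊆ T, I.ncard ≤ γ → ∃ i ∈ T \ I, j ∈ S i := by
    rw [Nat.succ_le_iff, lt_ncard_iff_forall_sdiff_nonempty hT (Set.sep_subset _ _)]
    simp only [Set.Nonempty, Set.mem_sdiff, Set.mem_ofPred_eq, and_right_comm]
  simp only [MultiCover, covers_iff]
  exact ⟨fun h I hI hIγ j hj => h j hj I hI hIγ, fun h j hj I hI hIγ => h I hI hIγ j hj⟩

theorem resilient_iff_multiCover_succ (hT : T ⊆ Set.Icc 1 r) :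
    Resilient N r S γ T ↔ MultiCover N S (γ + 1) T :=
  (resilient_iff_forall_sdiff_covers hT).trans
    (multiCover_succ_iff_forall_sdiff_covers ((Set.finite_Icc 1 r).subset hT)).symm

end MultiCover

/-- paper's Theorem 3(i).  Let `ε ≥ 1` and let `T*` be a
`γ`-resilient subset of `{1,…,r}` of minimum cardinality.  If `T' ⊆ {1,…,r}` is
`γ`-resilient and `|T'| ≤ ε·|T*|`, then `T'` is a multi-cover of `U` with demand
`γ + 1` and `|T'| ≤ ε·c`, where `c` is the minimum cardinality of a multi-cover of
`U` with demand `γ + 1`. -/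
theorem approx_resilient_gives_approx_multicover (N r : ℕ) (hN : 0 < N) (hr : 0 < r)
    (S : ℕ → Set ℕ) (hS : ∀ i ∈ Set.Icc 1 r, S i ⊆ Set.Icc 1 N)
    (hcov : ∀ e ∈ Set.Icc 1 N, ∃ i ∈ Set.Icc 1 r, e ∈ S i)
    (γ : ℕ) (hγ : 0 < γ) (ε : ℝ) (hε : 1 ≤ ε)
    (Tstar : Set ℕ) (hTstar : Tstar ⊆ Set.Icc 1 r)
    (hres : Resilient N r S γ Tstar)
    (hmin : ∀ T ⊆ Set.Icc 1 r, Resilient N r S γ T → Tstar.ncard ≤ T.ncard)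
    (T' : Set ℕ) (hT' : T' ⊆ Set.Icc 1 r)
    (hres' : Resilient N r S γ T')
    (hcard : (T'.ncard : ℝ) ≤ ε * Tstar.ncard)
    (c : ℕ)
    (hc : ∃ Tc ⊆ Set.Icc 1 r, MultiCover N S (γ + 1) Tc ∧ Tc.ncard = c)
    (hcmin : ∀ T ⊆ Set.Icc 1 r, MultiCover N S (γ + 1) T → c ≤ T.ncard) :
    MultiCover N S (γ + 1) T' ∧ (T'.ncard : ℝ) ≤ ε * c := by
  obtain ⟨Tc, hTc, hTc_cover, rfl⟩ := hc
  have hTstar_le : Tstar.ncard ≤ Tc.ncard :=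
    hmin Tc hTc ((resilient_iff_multiCover_succ hTc).mpr hTc_cover)
  refine ⟨(resilient_iff_multiCover_succ hT').mp hres', ?_⟩
  calc (T'.ncard : ℝ) ≤ ε * Tstar.ncard := hcard
    _ ≤ ε * Tc.ncard :=
      mul_le_mul_of_nonneg_left (Nat.cast_le.mpr hTstar_le) (zero_le_one.trans hε)

end ResilientFeedback
end
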